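/- European put price formula under the TCEV model: with constant rate r, the fair put price is p = -S̄_t β(t) χ'²(K̃/Δφ; δ, S̄_t^{2(1-a)}/Δφ) + K (β(t)/β(T))[χ'²(S̄_t^{2(1-a)}/Δφ; δ-2, 0) - χ'²(S̄_t^{2(1-a)}/Δφ; δ-2, K̃/Δφ)]. -/

import Mathlib

open MeasureTheory

/-- Modified Bessel function of the first kind `I_ν(x)` (series definition). -/
noncomputable def besselI (ν x : ℝ) : ℝ :=
  ∑' k : ℕ, (x / 2) ^ (2 * (k : ℝ) + ν) / ((k.factorial : ℝ) * Real.Gamma ((k : ℝ) + ν + 1))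

/-- The squared Bessel transition density of dimension `δ` over time `T`, from `x` to `y`,
with Bessel index `1 - δ/2` for `δ ≤ 2` (absorbing boundary, norm-decreasing part)
and `δ/2 - 1` for `δ > 2`; i.e. index `|δ/2 - 1|`. -/
noncomputable def besqDensity (δ y T x : ℝ) : ℝ :=
  (1 / (2 * T)) * (y / x) ^ ((1 / 2) * (δ / 2 - 1)) * Real.exp (-(x + y) / (2 * T)) *
    besselI |δ / 2 - 1| (Real.sqrt (x * y) / T)

/-- The noncentral chi-squared density with `k` degrees of freedom and
noncentrality parameter `lam`, evaluated at `z` (Poisson mixture of central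
chi-squared densities). -/
noncomputable def ncChiSqPDF (k lam z : ℝ) : ℝ :=
  ∑' j : ℕ, (Real.exp (-lam / 2) * (lam / 2) ^ j / (j.factorial : ℝ)) *
    (z ^ (k / 2 + (j : ℝ) - 1) * Real.exp (-z / 2) /
      (2 ^ (k / 2 + (j : ℝ)) * Real.Gamma (k / 2 + (j : ℝ))))

/-- The noncentral chi-squared CDF `χ'²(z; k, lam)`. -/
noncomputable def ncChiSqCDF (z k lam : ℝ) : ℝ :=
  ∫ y in (0 : ℝ)..z, ncChiSqPDF k lam y

noncomputable def gd (s z : ℝ) : ℝ := z ^ (s - 1) * Real.exp (-z) / Real.Gamma s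

noncomputable def PG (s u : ℝ) : ℝ := ∫ z in (0 : ℝ)..u, gd s z

noncomputable def pois (l : ℝ) (j : ℕ) : ℝ := Real.exp (-l) * l ^ j / (j.factorial : ℝ)

lemma gd_nonneg {s z : ℝ} (hs : 0 < s) (hz : 0 ≤ z) : 0 ≤ gd s z := by
  have := Real.Gamma_pos_of_pos hs
  unfold gd; positivity

lemma gd_integrableOn {s : ℝ} (hs : 0 < s) : IntegrableOn (gd s) (Set.Ioi 0) := by
  have h := (Real.GammaIntegral_convergent hs).div_const (Real.Gamma s)
  refine h.congr (Filter.Eventually.of_forall fun z => ?_)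
  simp only [gd]; ring

lemma gd_ii {s u : ℝ} (hs : 0 < s) (hu : 0 ≤ u) : IntervalIntegrable (gd s) volume 0 u := by
  rw [intervalIntegrable_iff_integrableOn_Ioc_of_le hu]
  exact (gd_integrableOn hs).mono_set Set.Ioc_subset_Ioi_self

lemma PG_nonneg {s u : ℝ} (hs : 0 < s) (hu : 0 ≤ u) : 0 ≤ PG s u :=
  intervalIntegral.integral_nonneg hu fun z hz => gd_nonneg hs hz.1

lemma PG_le_one {s u : ℝ} (hs : 0 < s) (hu : 0 ≤ u) : PG s u ≤ 1 := by
  have h1 : ∫ z in Set.Ioi (0 : ℝ), gd s z = 1 := by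
    have : ∀ z, gd s z = Real.exp (-z) * z ^ (s - 1) / Real.Gamma s := fun z => by
      simp only [gd]; ring
    simp_rw [this]
    rw [integral_div, ← Real.Gamma_eq_integral hs, div_self (Real.Gamma_pos_of_pos hs).ne']
  rw [← h1, PG, intervalIntegral.integral_of_le hu]
  refine setIntegral_mono_set (gd_integrableOn hs) ?_ ?_
  · filter_upwards [ae_restrict_mem measurableSet_Ioi] with z hz
    exact gd_nonneg hs (le_of_lt hz)
  · exact Set.Ioc_subset_Ioi_self.eventuallyLE

lemma PG_rec {s u : ℝ} (hs : 0 < s) (hu : 0 ≤ u) :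
    PG s u - PG (s + 1) u = u ^ s * Real.exp (-u) / Real.Gamma (s + 1) := by
  have hG := Real.Gamma_pos_of_pos hs
  have hs1 : 0 < s + 1 := by linarith
  unfold PG
  rw [← intervalIntegral.integral_sub (gd_ii hs hu) (gd_ii hs1 hu)]
  rw [intervalIntegral.integral_eq_sub_of_hasDerivAt_of_le
    (f := fun z => z ^ s * Real.exp (-z) / Real.Gamma (s + 1)) hu ?_ ?_
    ((gd_ii hs hu).sub (gd_ii hs1 hu))]
  · simp [Real.zero_rpow hs.ne']
  · refine ContinuousOn.div_const (ContinuousOn.mul ?_ (by fun_prop)) _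
    exact (Real.continuous_rpow_const hs.le).continuousOn
  · intro z hz
    have h1 := (Real.hasDerivAt_rpow_const (x := z) (p := s) (Or.inl hz.1.ne'))
    have h2 : HasDerivAt (fun z : ℝ => Real.exp (-z)) (-Real.exp (-z)) z := by
      simpa using (hasDerivAt_neg z).exp
    refine ((h1.mul h2).div_const (Real.Gamma (s + 1))).congr_deriv ?_
    simp only [gd, Real.Gamma_add_one hs.ne', add_sub_cancel_right]
    field_simp
    ring

lemma pois_hasSum (l : ℝ) : HasSum (pois l) 1 := by
  have h := (NormedSpace.expSeries_div_hasSum_exp (𝔸 := ℝ) l).mul_left (Real.exp (-l))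
  rw [← Real.exp_eq_exp_ℝ, ← Real.exp_add, neg_add_cancel, Real.exp_zero] at h
  have e : pois l = fun i : ℕ => Real.exp (-l) * (l ^ i / (i.factorial : ℝ)) := by
    funext j
    simp only [pois]; ring
  rw [e]; exact h

lemma pois_nonneg {l : ℝ} (hl : 0 ≤ l) (j : ℕ) : 0 ≤ pois l j := by
  unfold pois; positivity

lemma PG_nat {V : ℝ} (hV : 0 ≤ V) (j : ℕ) :
    PG ((j : ℝ) + 1) V = 1 - ∑ i ∈ Finset.range (j + 1), pois V i := by
  induction j with
  | zero =>
    simp only [PG, gd, pois]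
    simp
  | succ n ih =>
    have h := PG_rec (s := (n : ℝ) + 1) (u := V) (by positivity) hV
    rw [Finset.sum_range_succ, ← sub_sub, ← ih]
    have : pois V (n + 1) = V ^ ((n : ℝ) + 1) * Real.exp (-V) / Real.Gamma ((n : ℝ) + 1 + 1) := by
      have h2 := Real.Gamma_nat_eq_factorial (n + 1)
      push_cast at h2
      rw [h2, pois]
      have h3 : V ^ ((n : ℝ) + 1) = V ^ (n + 1) := by
        rw [← Real.rpow_natCast]; push_cast; rfl
      rw [h3]; ring
    rw [this, ← h]; push_cast; ring

lemma key {ν u V : ℝ} (hν : 0 < ν) (hu : 0 ≤ u) (hV : 0 ≤ V) :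
    HasSum (fun j : ℕ => u ^ (ν + j) * Real.exp (-u) / Real.Gamma (ν + j + 1) *
      PG ((j : ℝ) + 1) V) (PG ν u - ∑' j : ℕ, pois V j * PG (ν + j) u) := by
  have hpos : ∀ j : ℕ, 0 < ν + j := fun j => by positivity
  have hsm : Summable (fun j : ℕ => pois V j * PG (ν + j) u) := by
    refine Summable.of_nonneg_of_le (fun j => mul_nonneg (pois_nonneg hV j) (PG_nonneg (hpos j) hu))
      (fun j => ?_) (pois_hasSum V).summable
    exact mul_le_of_le_one_right (pois_nonneg hV j) (PG_le_one (hpos j) hu)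
  have hpart : ∀ N : ℕ, ∑ j ∈ Finset.range N, (u ^ (ν + j) * Real.exp (-u) / Real.Gamma (ν + j + 1) *
      PG ((j : ℝ) + 1) V) = PG ν u - ∑ j ∈ Finset.range N, pois V j * PG (ν + j) u
        - (1 - ∑ i ∈ Finset.range N, pois V i) * PG (ν + N) u := by
    intro N
    induction N with
    | zero => simp
    | succ n ih =>
      rw [Finset.sum_range_succ, ih, PG_nat hV, ← PG_rec (hpos n) hu]
      simp only [Finset.sum_range_succ]
      push_cast
      rw [← add_assoc]
      ring
  rw [hasSum_iff_tendsto_nat_of_nonneg]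
  · simp_rw [hpart]
    have h0 : Filter.Tendsto (fun N : ℕ => (1 - ∑ i ∈ Finset.range N, pois V i) * PG (ν + N) u)
        Filter.atTop (nhds 0) := by
      have h1 : Filter.Tendsto (fun N : ℕ => (1 - ∑ i ∈ Finset.range N, pois V i))
        Filter.atTop (nhds 0) := by
        simpa using (pois_hasSum V).tendsto_sum_nat.const_sub 1
      refine squeeze_zero_norm (fun N => ?_) (by simpa using h1.norm)
      rw [norm_mul]
      refine mul_le_of_le_one_right (norm_nonneg _) ?_
      rw [Real.norm_of_nonneg (PG_nonneg (hpos N) hu)]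
      exact PG_le_one (hpos N) hu
    simpa using (hsm.hasSum.tendsto_sum_nat.const_sub (PG ν u)).sub h0
  · intro j
    refine mul_nonneg ?_ (PG_nonneg (by positivity) hV)
    have := Real.Gamma_pos_of_pos (s := ν + j + 1) (by positivity)
    positivity

lemma scaled_int {s θ L : ℝ} (hθ : 0 < θ) :
    ∫ y in (0 : ℝ)..L, 1 / θ * gd s (y / θ) = PG s (L / θ) := by
  rw [intervalIntegral.integral_const_mul, intervalIntegral.integral_comp_div (gd s) hθ.ne']
  simp [PG]
  field_simp

lemma scaled_ii {s θ L : ℝ} (hs : 0 < s) (hθ : 0 < θ) (hL : 0 ≤ L) :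
    IntegrableOn (fun y => 1 / θ * gd s (y / θ)) (Set.Ioc 0 L) := by
  rw [← intervalIntegrable_iff_integrableOn_Ioc_of_le hL]
  apply IntervalIntegrable.const_mul
  have := IntervalIntegrable.comp_mul_right (gd_ii hs (u := L / θ) (by positivity)) (c := θ⁻¹)
  simpa [hθ.ne', div_eq_mul_inv] using this

/-- generic mixture -/
lemma mix {θ L : ℝ} (hθ : 0 < θ) (hL : 0 ≤ L) (w s : ℕ → ℝ) (hw : ∀ j, 0 ≤ w j)
    (hs : ∀ j, 0 < s j) :
    (∀ j, IntegrableOn (fun y => w j * (1 / θ * gd (s j) (y / θ))) (Set.Ioc 0 L)) ∧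
    (∀ j, ∫ y in Set.Ioc 0 L, w j * (1 / θ * gd (s j) (y / θ)) = w j * PG (s j) (L / θ)) ∧
    (∀ j, ∫ y in Set.Ioc 0 L, ‖w j * (1 / θ * gd (s j) (y / θ))‖ = w j * PG (s j) (L / θ)) := by
  have h2 : ∀ j, ∫ y in Set.Ioc 0 L, w j * (1 / θ * gd (s j) (y / θ)) =
      w j * PG (s j) (L / θ) := fun j => by
    rw [integral_const_mul, ← intervalIntegral.integral_of_le hL, scaled_int hθ]
  refine ⟨fun j => (scaled_ii (hs j) hθ hL).const_mul _, h2, fun j => ?_⟩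
  rw [← h2 j]
  refine setIntegral_congr_fun measurableSet_Ioc fun y hy => ?_
  have := gd_nonneg (hs j) (z := y / θ) (div_nonneg hy.1.le hθ.le)
  exact Real.norm_of_nonneg (mul_nonneg (hw j) (by positivity))

lemma pois_mul_summable {l u k : ℝ} (hl : 0 ≤ l) (hk : 0 < k) (hu : 0 ≤ u) :
    Summable (fun j : ℕ => pois l j * PG (k + j) u) :=
  Summable.of_nonneg_of_le (fun j => mul_nonneg (pois_nonneg hl j) (PG_nonneg (by positivity) hu))
      (fun j => mul_le_of_le_one_right (pois_nonneg hl j) (PG_le_one (by positivity) hu))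
      (pois_hasSum l).summable

lemma cdf_eq {z k lam : ℝ} (hz : 0 ≤ z) (hk : 0 < k) (hlam : 0 ≤ lam) :
    ncChiSqCDF z k lam = ∑' j : ℕ, pois (lam / 2) j * PG (k / 2 + j) (z / 2) := by
  have hl2 : 0 ≤ lam / 2 := by positivity
  obtain ⟨h1, h2, h3⟩ := mix (θ := 2) (L := z) two_pos hz (pois (lam / 2)) (fun j => k / 2 + j)
    (pois_nonneg hl2) (fun j => by positivity)
  have hsum := hasSum_integral_of_summable_integral_norm h1
    (by simp_rw [h3]; exact pois_mul_summable hl2 (by positivity) (by positivity))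
  simp_rw [h2] at hsum
  rw [hsum.tsum_eq, ncChiSqCDF, intervalIntegral.integral_of_le hz]
  refine setIntegral_congr_fun measurableSet_Ioc fun y hy => ?_
  simp only [ncChiSqPDF]
  refine tsum_congr fun j => ?_
  have hy0 : 0 < y := hy.1
  have hG := Real.Gamma_pos_of_pos (s := k / 2 + j) (by positivity)
  simp only [pois, gd]
  rw [Real.div_rpow hy0.le two_pos.le, Real.rpow_sub_one two_ne_zero (k / 2 + j), neg_div, neg_div]
  field_simp

lemma besq_eq {δ ν φ x y : ℝ} (hν : 0 < ν) (hδ : δ / 2 - 1 = ν) (hφ : 0 < φ) (hx : 0 < x)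
    (hy : 0 < y) : besqDensity δ y φ x =
      ∑' j : ℕ, pois (x / (2 * φ)) j * (1 / (2 * φ) * gd (ν + 1 + j) (y / (2 * φ))) := by
  unfold besqDensity besselI
  rw [hδ, abs_of_pos hν, ← tsum_mul_left]
  refine tsum_congr fun j => ?_
  have hG := Real.Gamma_pos_of_pos (s := ν + 1 + j) (by positivity)
  have e1 : (Real.sqrt (x * y) / φ / 2) ^ (2 * (j : ℝ) + ν) =
      (x / (2 * φ)) ^ j * (y / (2 * φ)) ^ j * ((x / (2 * φ)) ^ (ν / 2) * (y / (2 * φ)) ^ (ν / 2)) := by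
    have : Real.sqrt (x * y) / φ / 2 = ((x / (2 * φ)) * (y / (2 * φ))) ^ (1 / 2 : ℝ) := by
      rw [← Real.sqrt_eq_rpow, show x / (2 * φ) * (y / (2 * φ)) = x * y / (2 * φ) ^ 2 by
        field_simp, Real.sqrt_div (by positivity), Real.sqrt_sq (by positivity)]
      field_simp
    rw [this, ← Real.rpow_mul (by positivity), show 1 / 2 * (2 * (j : ℝ) + ν) = j + ν / 2 by ring,
      Real.rpow_add (by positivity), Real.rpow_natCast, mul_pow,
      Real.mul_rpow (by positivity) (by positivity)]
  have e2 : (y / x) ^ (1 / 2 * ν) = (y / (2 * φ)) ^ (ν / 2) / (x / (2 * φ)) ^ (ν / 2) := by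
    rw [← Real.div_rpow (by positivity) (by positivity)]
    congr 1
    · field_simp
    · ring
  have e3 : (y / (2 * φ)) ^ (ν + 1 + j - 1) =
      (y / (2 * φ)) ^ j * ((y / (2 * φ)) ^ (ν / 2) * (y / (2 * φ)) ^ (ν / 2)) := by
    rw [← Real.rpow_add (by positivity), ← Real.rpow_natCast, ← Real.rpow_add (by positivity)]
    congr 1; ring
  have e4 : Real.exp (-(x + y) / (2 * φ)) = Real.exp (-(x / (2 * φ))) * Real.exp (-(y / (2 * φ))) := by
    rw [← Real.exp_add]; congr 1; field_simp; ring
  have e5 : (j : ℝ) + ν + 1 = ν + 1 + j := by ring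
  rw [e1, e2, e4, e5, pois, gd, e3]
  have hxx : 0 < (x / (2 * φ)) ^ (ν / 2) := by positivity
  generalize (x / (2 * φ)) ^ (ν / 2) = X at *
  generalize (y / (2 * φ)) ^ (ν / 2) = Y at *
  generalize (x / (2 * φ)) ^ j = X' at *
  generalize (y / (2 * φ)) ^ j = Y' at *
  field_simp

/-- Symmetry relation, term by term. -/
lemma sym_term {ν θ x y : ℝ} (hν : 0 < ν) (hθ : 0 < θ) (hx : 0 < x) (hy : 0 < y) (j : ℕ) :
    x ^ ν / y ^ ν * (pois (x / θ) j * (1 / θ * gd (ν + 1 + j) (y / θ))) =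
    ((x / θ) ^ (ν + j) * Real.exp (-(x / θ)) / Real.Gamma (ν + j + 1)) *
      (1 / θ * gd ((j : ℝ) + 1) (y / θ)) := by
  have hG := Real.Gamma_pos_of_pos (s := ν + 1 + j) (by positivity)
  have e0 : x ^ ν / y ^ ν = (x / θ) ^ ν / (y / θ) ^ ν := by
    rw [← Real.div_rpow (by positivity) (by positivity), ← Real.div_rpow (by positivity) (by positivity)]
    congr 1; field_simp
  have e3 : (y / θ) ^ (ν + 1 + j - 1) = (y / θ) ^ ν * (y / θ) ^ j := by
    rw [← Real.rpow_natCast, ← Real.rpow_add (by positivity)]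
    congr 1; ring
  have e1 : (x / θ) ^ (ν + j) = (x / θ) ^ ν * (x / θ) ^ j := by
    rw [← Real.rpow_natCast, ← Real.rpow_add (by positivity)]
  have e5 : ν + j + 1 = ν + 1 + j := by ring
  have hY : 0 < (y / θ) ^ ν := by positivity
  rw [e0, e1, e5, pois, gd, gd, e3, add_sub_cancel_right, Real.rpow_natCast,
    Real.Gamma_nat_eq_factorial]
  generalize (x / θ) ^ ν = X at *
  generalize (y / θ) ^ ν = Y at *
  generalize (x / θ) ^ j = X' at *
  generalize (y / θ) ^ j = Y' at *
  field_simp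

/-- European put price formula under the TCEV model with constant short rate `r`:
the fair (real-world) put price
`p = E[(S*_t/S*_T)(K - S*_T)^+]`, computed with `S̄_T = X_{φ(T)}^{1/(2(1-a))}` for a
BESQ`^δ` process `X` started at `S̄_t^{2(1-a)}`, equals
`-S̄_t β(t) χ'²(K̃/Δφ; δ, S̄_t^{2(1-a)}/Δφ)
  + K (β(t)/β(T))[χ'²(S̄_t^{2(1-a)}/Δφ; δ-2, 0) - χ'²(S̄_t^{2(1-a)}/Δφ; δ-2, K̃/Δφ)]`. -/
theorem stmt15 (r c a α₀ η t T K Sbar : ℝ)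
    (hc : 0 < c) (ha : a < 1) (hα : 0 < α₀) (hη : 0 < η)
    (ht : 0 ≤ t) (htT : t < T) (hK : 0 < K) (hS : 0 < Sbar)
    (β : ℝ → ℝ) (hβ : ∀ u, β u = Real.exp (r * u))
    (δ : ℝ) (hδ : δ = (3 - 2 * a) / (1 - a))
    (φ : ℝ → ℝ)
    (hφ : ∀ u, φ u = (1 - a) * α₀ ^ (2 * (1 - a)) * c ^ 2 / (2 * η) *
      (Real.exp (2 * (1 - a) * η * u) - 1))
    (Δφ : ℝ) (hΔφ : Δφ = φ T - φ t)
    (Ktilde : ℝ) (hKt : Ktilde = (K / β T) ^ (2 * (1 - a)))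
    (p : ℝ)
    (hp : p = ∫ y in Set.Ioi (0 : ℝ),
      (Sbar * β t / (β T * y ^ (1 / (2 * (1 - a))))) *
        max (K - β T * y ^ (1 / (2 * (1 - a)))) 0 *
        besqDensity δ y Δφ (Sbar ^ (2 * (1 - a)))) :
    p = -(Sbar * β t) * ncChiSqCDF (Ktilde / Δφ) δ (Sbar ^ (2 * (1 - a)) / Δφ)
      + K * (β t / β T) *
        (ncChiSqCDF (Sbar ^ (2 * (1 - a)) / Δφ) (δ - 2) 0 -
          ncChiSqCDF (Sbar ^ (2 * (1 - a)) / Δφ) (δ - 2) (Ktilde / Δφ)) := by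
  have h1a : 0 < 1 - a := by linarith
  obtain ⟨ν, hνdef⟩ : ∃ ν : ℝ, ν = 1 / (2 * (1 - a)) := ⟨_, rfl⟩
  have hν : 0 < ν := by rw [hνdef]; positivity
  have hinv : 2 * (1 - a) = ν⁻¹ := by rw [hνdef]; field_simp
  have hδν : δ / 2 - 1 = ν := by rw [hδ, hνdef]; field_simp; ring
  have hΔ : 0 < Δφ := by
    rw [hΔφ, hφ, hφ, ← mul_sub]
    have : Real.exp (2 * (1 - a) * η * t) < Real.exp (2 * (1 - a) * η * T) :=
      Real.exp_lt_exp.mpr (by gcongr)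
    apply mul_pos (by positivity); linarith
  have hbt : 0 < β t := by rw [hβ]; positivity
  have hbT : 0 < β T := by rw [hβ]; positivity
  rw [← hνdef, hinv] at hp
  rw [hinv] at hKt ⊢
  have hx : 0 < Sbar ^ ν⁻¹ := by positivity
  have hSx : (Sbar ^ ν⁻¹) ^ ν = Sbar := Real.rpow_inv_rpow hS.le hν.ne'
  generalize Sbar ^ ν⁻¹ = x at *
  have hKp : 0 < Ktilde := by rw [hKt]; positivity
  have hKν : Ktilde ^ ν = K / β T := by
    rw [hKt]; exact Real.rpow_inv_rpow (by positivity) hν.ne'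
  obtain ⟨θ, hθdef⟩ : ∃ θ : ℝ, θ = 2 * Δφ := ⟨_, rfl⟩
  have hθ : 0 < θ := by rw [hθdef]; positivity
  have hxθ : x / Δφ / 2 = x / θ := by rw [hθdef]; field_simp
  have hKθ : Ktilde / Δφ / 2 = Ktilde / θ := by rw [hθdef]; field_simp
  have hd2 : (δ - 2) / 2 = ν := by rw [← hδν]; ring
  have hd : δ / 2 = ν + 1 := by rw [← hδν]; ring
  have hδ2 : 0 < δ - 2 := by linarith
  rw [cdf_eq (by positivity) (by linarith) (by positivity), cdf_eq (by positivity) hδ2 le_rfl,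
    cdf_eq (by positivity) hδ2 (by positivity), hxθ, hKθ, hd2, hd]
  have hz : ∑' j : ℕ, pois (0 / 2) j * PG (ν + j) (x / θ) = PG ν (x / θ) := by
    rw [tsum_eq_single 0]
    · simp [pois]
    · intro j hj
      simp [pois, hj]
  have hu : 0 ≤ x / θ := by positivity
  have hV : 0 ≤ Ktilde / θ := by positivity
  have hkey := key hν hu hV
  rw [hz, ← hkey.tsum_eq]
  obtain ⟨f1, f2, f3⟩ := mix hθ hKp.le
    (fun j : ℕ => (x / θ) ^ (ν + j) * Real.exp (-(x / θ)) / Real.Gamma (ν + j + 1))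
    (fun j : ℕ => (j : ℝ) + 1)
    (fun j => by
      have := Real.Gamma_pos_of_pos (s := ν + j + 1) (by positivity)
      positivity) (fun j => by positivity)
  obtain ⟨g1, g2, g3⟩ := mix hθ hKp.le (pois (x / θ)) (fun j : ℕ => ν + 1 + (j : ℝ))
    (pois_nonneg hu) (fun j => by positivity)
  have hgs := pois_mul_summable (k := ν + 1) hu (by positivity) hV
  have fI := fun j => (f1 j).const_mul (K * (β t / β T))
  have gI := fun j => (g1 j).const_mul (Sbar * β t)
  have hsum := hasSum_integral_of_summable_integral_norm (fun j => (fI j).sub (gI j)) (by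
    refine Summable.of_nonneg_of_le (fun j => integral_nonneg fun _ => norm_nonneg _) (fun j => ?_)
      ((hkey.summable.mul_left (K * (β t / β T))).add (hgs.mul_left (Sbar * β t)))
    rw [← f3 j, ← g3 j, ← integral_const_mul, ← integral_const_mul,
      ← integral_add ((f1 j).norm.const_mul _) ((g1 j).norm.const_mul _)]
    refine integral_mono ((fI j).sub (gI j)).norm
      (((f1 j).norm.const_mul _).add ((g1 j).norm.const_mul _)) fun y => ?_
    refine (norm_sub_le _ _).trans (le_of_eq ?_)
    simp only [norm_mul (K * (β t / β T)), norm_mul (Sbar * β t)]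
    rw [Real.norm_of_nonneg (r := K * (β t / β T)) (by positivity),
      Real.norm_of_nonneg (r := Sbar * β t) (by positivity)])
  have hterm := fun j => integral_sub (fI j) (gI j)
  simp only [Pi.sub_apply] at hsum
  simp only [hterm, integral_const_mul, f2, g2] at hsum
  have hpI : p = ∫ y in Set.Ioc (0 : ℝ) Ktilde, ∑' j : ℕ,
      (K * (β t / β T) * ((x / θ) ^ (ν + j) * Real.exp (-(x / θ)) / Real.Gamma (ν + j + 1) *
        (1 / θ * gd ((j : ℝ) + 1) (y / θ))) -
      Sbar * β t * (pois (x / θ) j * (1 / θ * gd (ν + 1 + j) (y / θ)))) := by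
    rw [hp]
    rw [setIntegral_eq_of_subset_of_forall_sdiff_eq_zero measurableSet_Ioi
      (show Set.Ioc (0 : ℝ) Ktilde ⊆ Set.Ioi 0 from Set.Ioc_subset_Ioi_self)]
    · refine setIntegral_congr_fun measurableSet_Ioc fun y hy => ?_
      have hy0 : 0 < y := hy.1
      have hyν : 0 < y ^ ν := by positivity
      have hle : β T * y ^ ν ≤ K := by
        have := Real.rpow_le_rpow hy0.le hy.2 hν.le
        rw [hKν, le_div_iff₀ hbT] at this
        linarith
      rw [max_eq_left (by linarith), besq_eq hν hδν hΔ hx hy0, ← hθdef, ← tsum_mul_left]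
      refine tsum_congr fun j => ?_
      rw [← sym_term hν hθ hx hy0, hSx]
      field_simp
    · intro y hy
      have hy0 : 0 < y := hy.1
      have hyK : Ktilde < y := by
        by_contra h
        exact hy.2 ⟨hy0, not_lt.mp h⟩
      have hle : K ≤ β T * y ^ ν := by
        have := Real.rpow_le_rpow hKp.le hyK.le hν.le
        rw [hKν, div_le_iff₀ hbT] at this
        linarith
      rw [max_eq_right (by linarith)]
      simp
  rw [hpI, ← hsum.tsum_eq,
    (hkey.summable.mul_left (K * (β t / β T))).tsum_sub (hgs.mul_left (Sbar * β t)),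
    tsum_mul_left, tsum_mul_left]
  ring
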